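/- For every integer n ≥ 1, in the polynomial ring 𝔽₃[x,y] one has the congruence f^n_{x,y}(x) ≡ x^{3^n} + y + y^3 + y^9 + ⋯ + y^{3^{n-1}} (mod 3); that is, the image of f^n_{x,y}(x) under reduction of coefficients modulo 3 equals x^{3^n} + Σ_{i=0}^{n-1} y^{3^i}. -/

import Mathlib

/-!
In characteristic 3 the term `3 x² z` vanishes, so `f` reduces to the map `z ↦ z³ + y`:
Frobenius followed by translation by `y` (`red_fnx_succ`). Since cubing is additive
(`add_pow_char`, `sum_pow_char`), each iteration sends `x^(3^n)` to `x^(3^(n+1))`, shifts the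
sum `y + y³ + ⋯ + y^(3^(n-1))` to `y³ + y⁹ + ⋯ + y^(3^n)`, and restores the term `y`.
-/

noncomputable section

/-- The polynomial ring ℤ[y]. -/
abbrev Ry : Type := Polynomial ℤ

/-- The polynomial ring ℤ[x,y] = (ℤ[y])[x], with `x` the outer variable. -/
abbrev Rxy : Type := Polynomial Ry

/-- The element `x ∈ ℤ[x,y]`. -/
def xP : Rxy := Polynomial.X

/-- The element `y ∈ ℤ[x,y]`. -/
def yP : Rxy := Polynomial.C Polynomial.X

/-- `f_{x,y}(z) = z^3 - 3x^2 z + y`, as a polynomial in `z` with coefficients in `ℤ[x,y]`. -/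
def fxy : Polynomial Rxy :=
  Polynomial.X ^ 3 - Polynomial.C (3 * xP ^ 2) * Polynomial.X + Polynomial.C yP

/-- The `n`-th iterate `f^n_{x,y}(z)` (in the variable `z`). -/
def fIter : ℕ → Polynomial Rxy
  | 0 => Polynomial.X
  | n + 1 => fxy.comp (fIter n)

/-- `f^n_{x,y}(x)`, the `n`-th iterate evaluated at `z = x`, an element of `ℤ[x,y]`. -/
def fnx (n : ℕ) : Rxy := (fIter n).eval xP

/-- The coefficient `a_k(y) ∈ ℤ[y]` of `x^(3^n - k)` in `f^n_{x,y}(x)`. -/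
def a (n k : ℕ) : Ry := (fnx n).coeff (3 ^ n - k)

/-- Reduction of coefficients modulo 3: `ℤ[x,y] → 𝔽₃[x,y]`. -/
def red : Rxy →+* Polynomial (Polynomial (ZMod 3)) :=
  Polynomial.mapRingHom (Polynomial.mapRingHom (Int.castRingHom (ZMod 3)))

theorem fnx_zero : fnx 0 = xP := by
  simp [fnx, fIter]

theorem fnx_succ (n : ℕ) : fnx (n + 1) = fnx n ^ 3 - 3 * xP ^ 2 * fnx n + yP := by
  simp [fnx, fIter, fxy]

theorem red_fnx_succ (n : ℕ) :
    red (fnx (n + 1)) = red (fnx n) ^ 3 + Polynomial.C Polynomial.X := by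
  have h3 : (3 : Polynomial (Polynomial (ZMod 3))) = 0 :=
    CharP.ofNat_eq_zero (Polynomial (Polynomial (ZMod 3))) 3
  have hy : red yP = Polynomial.C Polynomial.X := by simp [red, yP]
  rw [fnx_succ, map_add, map_sub, map_mul, map_mul, map_pow, map_ofNat, h3, hy]
  ring

/-- For `n ≥ 1`, in `𝔽₃[x,y]` one has
`f^n_{x,y}(x) ≡ x^(3^n) + y + y^3 + y^9 + ⋯ + y^(3^(n-1)) (mod 3)`. -/
theorem iterate_mod_three (n : ℕ) (hn : 1 ≤ n) :
    red (fnx n) =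
      Polynomial.X ^ 3 ^ n +
        Polynomial.C (∑ i ∈ Finset.range n, (Polynomial.X : Polynomial (ZMod 3)) ^ 3 ^ i) := by
  clear hn
  induction n with
  | zero => simp [fnx_zero, red, xP]
  | succ n ih =>
    rw [red_fnx_succ, ih, add_pow_char, ← Polynomial.C_pow, sum_pow_char, Finset.sum_range_succ',
      Polynomial.C_add, ← pow_mul, ← pow_succ, add_assoc]
    simp only [← pow_mul, ← pow_succ, pow_zero, pow_one]
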